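/- Symmetry preserving regularity lemma: For every function F : ℝ⁺×ℕ → ℝ⁺ that is decreasing in each coordinate and every ε > 0 there is a constant n such that for every finite nonempty set V and every symmetric matrix G : V×V → [-1,1] there is a decomposition G = S + E + R such that: (1) S is a step function with s ≤ n steps; (2) ‖gSg⁻¹ − S‖_∞ ≤ ε for every g ∈ Aut(G); (3) ‖E‖₂ ≤ ε; (4) ‖R‖_□ ≤ F(ε,s). -/

import Mathlib

open Finset

/-!
Normalize the eigenvalues of `G` by `|V|`; their squares sum to `‖G‖₂² ≤ 1`. Cut the spectrum at
two thresholds `δ' ≤ δ`. The part of `G` below `δ'` has normalized operator norm, hence cut norm, at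
most `δ'`. Above `δ` there are at most `1 / δ²` eigenvalues, and their eigenvectors have bounded
entries, so rounding these entries turns the top part into a step function with a number of steps
bounded in terms of `δ` and the accuracy. The top part is a function of `G`, hence exactly invariant
under `Aut(G)`, and the rounded matrix is invariant up to twice the rounding error.

The threshold `δ'` can be chosen after `δ`, smaller than `F` at every admissible number of steps.
Iterating `δ ↦ δ'` produces disjoint spectral bands `(δ', δ]`, so among boundedly many of them one
carries little `ℓ²` mass; it is absorbed, with the rounding error, into `E`.
-/

universe u

section StepMatrices

/-- `S` is a step function with `s` steps: the fibres of `P` are the parts of the partition, and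
surjectivity says that no part is empty. -/
def IsStepMatrix {V α : Type*} (s : ℕ) (S : V → V → α) : Prop :=
  ∃ (P : V → Fin s) (T : Fin s → Fin s → α), Function.Surjective P ∧ ∀ a b, S a b = T (P a) (P b)

theorem exists_isStepMatrix_dist_le_of_fibers {V α κ : Type*} [PseudoMetricSpace α] [Fintype κ]
    (q : V → κ) (M : V → V → α) {η : ℝ}
    (hM : ∀ a a' b b', q a = q a' → q b = q b' → dist (M a b) (M a' b') ≤ η) :
    ∃ (s : ℕ) (S : V → V → α), s ≤ Fintype.card κ ∧ IsStepMatrix s S ∧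
      ∀ a b, dist (M a b) (S a b) ≤ η := by
  classical
  let P : V → Fin (Fintype.card (Set.range q)) :=
    Fintype.equivFin (Set.range q) ∘ Set.rangeFactorization q
  have hP : P.Surjective :=
    (Equiv.surjective _).comp Set.rangeFactorization_surjective
  let rep := Function.surjInv hP
  have hq_rep (a : V) : q a = q (rep (P a)) := by
    have : P (rep (P a)) = P a := Function.surjInv_eq hP _
    exact congrArg Subtype.val ((Fintype.equivFin _).injective this).symm
  exact ⟨_, fun a b => M (rep (P a)) (rep (P b)),
    Fintype.card_le_of_injective _ Subtype.val_injective,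
    ⟨P, fun x y => M (rep x) (rep y), hP, fun _ _ => rfl⟩,
    fun a b => hM _ _ _ _ (hq_rep a) (hq_rep b)⟩

theorem exists_finset_dist_lt_of_totallyBounded {α : Type*} [PseudoMetricSpace α] {K : Set α}
    (hK : TotallyBounded K) {ρ : ℝ} (hρ : 0 < ρ) :
    ∃ t : Finset α, ∀ x ∈ K, ∀ y,
      (∀ z ∈ t, dist x z < ρ / 2 ↔ dist y z < ρ / 2) → dist x y < ρ := by
  obtain ⟨t, ht, hcover⟩ := Metric.totallyBounded_iff.1 hK (ρ / 2) (half_pos hρ)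
  refine ⟨ht.toFinset, fun x hx y hxy => ?_⟩
  obtain ⟨z, hz, hxz⟩ := Set.mem_iUnion₂.1 (hcover hx)
  have hyz := (hxy z (ht.mem_toFinset.2 hz)).1 hxz
  exact dist_triangle_right x y z |>.trans_lt (by rw [← add_halves ρ]; exact add_lt_add hxz hyz)

variable {𝕜 : Type*} [RCLike 𝕜]

theorem norm_mul_mul_star_sub_le {c x x' y y' : 𝕜} {C ρ : ℝ} (hc : ‖c‖ ≤ 1)
    (hx' : ‖x'‖ ≤ C) (hy : ‖y‖ ≤ C) (hxx' : ‖x - x'‖ ≤ ρ) (hyy' : ‖y - y'‖ ≤ ρ) :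
    ‖c * x * star y - c * x' * star y'‖ ≤ 2 * C * ρ := by
  have hC : 0 ≤ C := (norm_nonneg _).trans hy
  calc ‖c * x * star y - c * x' * star y'‖
      = ‖c‖ * ‖(x - x') * star y + x' * star (y - y')‖ := by
        rw [← norm_mul, star_sub]; congr 1; ring
    _ ≤ 1 * (‖x - x'‖ * ‖y‖ + ‖x'‖ * ‖y - y'‖) := by
        gcongr
        refine (norm_add_le _ _).trans_eq ?_
        simp only [norm_mul, norm_star]
    _ ≤ 1 * (ρ * C + C * ρ) := by
        have hρ : 0 ≤ ρ := (norm_nonneg _).trans hxx'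
        gcongr
    _ = 2 * C * ρ := by ring

theorem exists_card_bound_isStepMatrix_near_sum (K : ℕ) (C : ℝ) {η : ℝ} (hη : 0 < η) :
    ∃ n : ℕ, ∀ {V ι : Type u} (I : Finset ι) (c : ι → 𝕜) (v : V → ι → 𝕜), #I ≤ K →
      (∀ i ∈ I, ‖c i‖ ≤ 1) → (∀ i ∈ I, ∀ a, ‖v a i‖ ≤ C) →
      ∃ (s : ℕ) (S : V → V → 𝕜), s ≤ n ∧ IsStepMatrix s S ∧
        ∀ a b, dist (∑ i ∈ I, c i * v a i * star (v b i)) (S a b) ≤ η := by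
  classical
  let ρ := η / (2 * K * |C| + 1)
  have hρ : 0 < ρ := by positivity
  have hKρ : K * (2 * |C| * ρ) ≤ η := by
    calc K * (2 * |C| * ρ) = η * ((2 * K * |C|) / (2 * K * |C| + 1)) := by simp only [ρ]; ring
      _ ≤ η * 1 := by
        gcongr
        exact (div_le_one (by positivity)).2 (le_add_of_nonneg_right zero_le_one)
      _ = η := mul_one η
  obtain ⟨t, ht⟩ := exists_finset_dist_lt_of_totallyBounded
    (isCompact_closedBall (0 : 𝕜) |C|).totallyBounded hρ
  refine ⟨Fintype.card (t → Prop) ^ K, fun {V ι} I c v hI hc hv => ?_⟩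
  replace hv (i) (hi : i ∈ I) (a) : ‖v a i‖ ≤ |C| := (hv i hi a).trans (le_abs_self C)
  let q : V → I → t → Prop := fun a i z => dist (v a i) z < ρ / 2
  have hq {a a' : V} (haa' : q a = q a') (i) (hi : i ∈ I) : ‖v a i - v a' i‖ ≤ ρ := by
    rw [← dist_eq_norm]
    refine (ht _ (mem_closedBall_zero_iff.2 (hv i hi a)) _ fun z hz => ?_).le
    exact iff_of_eq (congrFun (congrFun haa' ⟨i, hi⟩) ⟨z, hz⟩)
  obtain ⟨s, S, hs, hS, hMS⟩ := exists_isStepMatrix_dist_le_of_fibers q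
    (fun a b => ∑ i ∈ I, c i * v a i * star (v b i)) (η := η) fun a a' b b' ha hb => by
      rw [dist_eq_norm, ← sum_sub_distrib]
      calc _ ≤ ∑ i ∈ I, 2 * |C| * ρ := norm_sum_le_of_le _ fun i hi =>
            norm_mul_mul_star_sub_le (hc i hi) (hv i hi a') (hv i hi b) (hq ha i hi) (hq hb i hi)
        _ = #I * (2 * |C| * ρ) := by rw [sum_const, nsmul_eq_mul]
        _ ≤ K * (2 * |C| * ρ) := by gcongr
        _ ≤ η := hKρ
  refine ⟨s, S, hs.trans ?_, hS, hMS⟩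
  calc Fintype.card (I → t → Prop) = Fintype.card (t → Prop) ^ #I := by
        rw [Fintype.card_fun, Fintype.card_coe]
    _ ≤ Fintype.card (t → Prop) ^ K := Nat.pow_le_pow_right Fintype.card_pos hI

theorem dist_comp_comp_le_of_dist_le {V α : Type*} [PseudoMetricSpace α]
    {M S : V → V → α} {η : ℝ} (hMS : ∀ a b, dist (M a b) (S a b) ≤ η) {g : V → V}
    (hg : ∀ a b, M (g a) (g b) = M a b) (a b : V) : dist (S (g a) (g b)) (S a b) ≤ η + η :=
  (dist_triangle_left _ _ (M a b)).trans (add_le_add (hg a b ▸ hMS (g a) (g b)) (hMS a b))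

end StepMatrices

section Thresholds

theorem exists_mem_sum_filter_mem_le {ι κ β : Type*} [Fintype ι] {t : Finset κ} (ht : t.Nonempty)
    {B : κ → Set β} (hB : (t : Set κ).PairwiseDisjoint B) (x : ι → β) {w : ι → ℝ}
    (hw : ∀ i, 0 ≤ w i) {ε : ℝ} (hε : ∑ i, w i ≤ #t * ε)
    [∀ j, DecidablePred (· ∈ B j)] :
    ∃ k ∈ t, ∑ i with x i ∈ B k, w i ≤ ε := by
  classical
  refine exists_le_of_sum_le ht ?_
  have hdisj : (t : Set κ).PairwiseDisjoint fun k => ({i | x i ∈ B k} : Finset ι) :=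
    fun _ hk _ hl hkl => disjoint_filter.2 fun i _ hik hil =>
      Set.disjoint_left.1 (hB hk hl hkl) hik hil
  calc ∑ k ∈ t, ∑ i with x i ∈ B k, w i
      = ∑ i ∈ t.biUnion fun k => {i | x i ∈ B k}, w i := (sum_biUnion hdisj).symm
    _ ≤ ∑ i, w i := sum_le_univ_sum_of_nonneg hw
    _ ≤ ∑ _ ∈ t, ε := by rwa [sum_const, nsmul_eq_mul]

theorem exists_finset_forall_exists_sum_Ioc_le {φ : ℝ → ℝ} (hφ : ∀ δ, 0 < δ → 0 < φ δ ∧ φ δ ≤ δ)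
    {ε : ℝ} (hε : 0 < ε) :
    ∃ D : Finset ℝ, (∀ δ ∈ D, 0 < δ) ∧ ∀ {ι : Type u} [Fintype ι] (x w : ι → ℝ), (∀ i, 0 ≤ w i) →
      ∑ i, w i ≤ 1 → ∃ δ ∈ D, ∑ i with x i ∈ Set.Ioc (φ δ) δ, w i ≤ ε := by
  obtain ⟨m, hm⟩ := exists_nat_gt (1 / ε)
  have hm_pos : 0 < m := Nat.cast_pos.1 ((one_div_pos.2 hε).trans hm)
  have hpos (k : ℕ) : 0 < φ^[k] 1 := by
    induction k with
    | zero => exact one_pos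
    | succ k ih => rw [Function.iterate_succ_apply']; exact (hφ _ ih).1
  have hanti : Antitone fun k => φ^[k] 1 := antitone_nat_of_succ_le fun k => by
    rw [Function.iterate_succ_apply']; exact (hφ _ (hpos k)).2
  refine ⟨(range m).image fun k => φ^[k] 1, forall_mem_image.2 fun k _ => hpos k,
    fun x w hw hw_sum => ?_⟩
  obtain ⟨k, hk, hk_sum⟩ := exists_mem_sum_filter_mem_le (nonempty_range_iff.2 hm_pos.ne')
    (hanti.pairwise_disjoint_on_Ioc_succ.set_pairwise _) x hw (ε := ε) <| by
      rw [card_range]; exact hw_sum.trans ((div_lt_iff₀ hε).1 hm).le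
  refine ⟨φ^[k] 1, mem_image_of_mem _ hk, ?_⟩
  rwa [Nat.succ_eq_succ, Function.iterate_succ_apply'] at hk_sum

theorem card_filter_lt_abs_le {ι : Type*} [Fintype ι] {x : ι → ℝ} (hx : ∑ i, x i ^ 2 ≤ 1)
    {δ : ℝ} (hδ : 0 < δ) : #{i | δ < |x i|} ≤ ⌊1 / δ ^ 2⌋₊ := by
  rw [Nat.le_floor_iff (by positivity), le_div_iff₀ (by positivity)]
  calc #{i | δ < |x i|} * δ ^ 2 = ∑ i with δ < |x i|, δ ^ 2 := by rw [sum_const, nsmul_eq_mul]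
    _ ≤ ∑ i with δ < |x i|, x i ^ 2 := by
        refine sum_le_sum fun i hi => ?_
        rw [← sq_abs (x i)]
        gcongr
        exact (mem_filter.1 hi).2.le
    _ ≤ ∑ i, x i ^ 2 := sum_le_univ_sum_of_nonneg fun i => sq_nonneg _
    _ ≤ 1 := hx

theorem exists_gt_forall_le_of_forall_lt {α β : Type*} [Preorder α] [LocallyFiniteOrderBot α]
    [LinearOrder β] {F : α → β} {b : β} (hF : ∀ x, b < F x) (x : α) :
    ∃ c, b < c ∧ ∀ y ≤ x, c ≤ F y :=
  ⟨(Iic x).inf' nonempty_Iic F, (lt_inf'_iff _).2 fun y _ => hF y,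
    fun _ hy => inf'_le F (mem_Iic.2 hy)⟩

end Thresholds

section FunctionalCalculus

variable {V 𝕜 : Type*} [RCLike 𝕜] [Fintype V] [DecidableEq V] {A : Matrix V V 𝕜}

theorem commute_permMatrix_iff {R : Type*} [NonAssocSemiring R] {M : Matrix V V R}
    {σ : Equiv.Perm V} : Commute M (σ.permMatrix R) ↔ M.submatrix σ σ = M := by
  rw [commute_iff_eq, Equiv.Perm.permMatrix, PEquiv.toMatrix_toPEquiv_mul,
    PEquiv.mul_toMatrix_toPEquiv]
  constructor
  · intro h
    simpa [Matrix.submatrix_submatrix] using (congrArg (·.submatrix id σ) h).symm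
  · intro h
    nth_rewrite 1 [← h]
    simp [Matrix.submatrix_submatrix]

theorem submatrix_cfc_eq_self {σ : Equiv.Perm V} (hσ : A.submatrix σ σ = A) (f : ℝ → ℝ) :
    (cfc f A).submatrix σ σ = cfc f A :=
  commute_permMatrix_iff.1 ((commute_permMatrix_iff.2 hσ).cfc_real f)

theorem cfc_apply_eq_sum (hA : A.IsHermitian) (f : ℝ → ℝ) (a b : V) :
    cfc f A a b = ∑ i, (f (hA.eigenvalues i) : 𝕜) *
      (hA.eigenvectorUnitary : Matrix V V 𝕜) a i *
        star ((hA.eigenvectorUnitary : Matrix V V 𝕜) b i) := by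
  rw [hA.cfc_eq, Matrix.IsHermitian.cfc, Unitary.conjStarAlgAut_apply, Matrix.mul_apply]
  refine sum_congr rfl fun i _ => ?_
  rw [Matrix.mul_diagonal, Matrix.star_apply, Function.comp_apply, Function.comp_apply,
    mul_comm ((hA.eigenvectorUnitary : Matrix V V 𝕜) a i)]

theorem sum_norm_sq_cfc_row (hA : A.IsHermitian) (f : ℝ → ℝ) (a : V) :
    ∑ b, ‖cfc f A a b‖ ^ 2 = ∑ i, f (hA.eigenvalues i) ^ 2 *
      ‖(hA.eigenvectorUnitary : Matrix V V 𝕜) a i‖ ^ 2 := by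
  have hcont : ContinuousOn f (spectrum ℝ A) := A.finite_real_spectrum.continuousOn f
  have hstar (b : V) : cfc f A b a = star (cfc f A a b) :=
    ((cfc_predicate f A : IsSelfAdjoint _).isHermitian.apply b a).symm
  -- both sides are the diagonal entry of `f(A)² = (f²)(A)`
  have hsq : cfc (fun x => f x * f x) A a a = ∑ b, cfc f A a b * star (cfc f A a b) := by
    simp_rw [cfc_mul f f A hcont hcont, Matrix.mul_apply, hstar]
  rw [cfc_apply_eq_sum hA] at hsq
  simp only [RCLike.star_def, mul_assoc, RCLike.mul_conj] at hsq
  simp only [sq (f _)]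
  exact_mod_cast hsq.symm

theorem sum_norm_sq_cfc (hA : A.IsHermitian) (f : ℝ → ℝ) :
    ∑ a, ∑ b, ‖cfc f A a b‖ ^ 2 = ∑ i, f (hA.eigenvalues i) ^ 2 := by
  have hcol (i : V) : ∑ a, ‖(hA.eigenvectorUnitary : Matrix V V 𝕜) a i‖ ^ 2 = 1 := by
    simp only [hA.eigenvectorUnitary_apply]
    rw [← EuclideanSpace.norm_sq_eq, hA.eigenvectorBasis.norm_eq_one, one_pow]
  simp_rw [sum_norm_sq_cfc_row hA]
  rw [sum_comm]
  simp_rw [← mul_sum, hcol, mul_one]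

open scoped Matrix.Norms.L2Operator in
theorem l2_opNorm_cfc_le (hA : A.IsHermitian) {f : ℝ → ℝ} {c : ℝ} (hc : 0 ≤ c)
    (hf : ∀ i, |f (hA.eigenvalues i)| ≤ c) : ‖cfc f A‖ ≤ c := by
  rw [hA.cfc_eq, Matrix.IsHermitian.cfc, Unitary.conjStarAlgAut_apply, ← Unitary.coe_star,
    CStarRing.norm_mul_coe_unitary, CStarRing.norm_coe_unitary_mul, Matrix.l2_opNorm_diagonal,
    pi_norm_le_iff_of_nonneg hc]
  intro i
  simpa only [Function.comp_apply, RCLike.norm_ofReal] using hf i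

end FunctionalCalculus

section Norms

variable {V 𝕜 : Type*} [RCLike 𝕜] [Fintype V]

/-- The square of the normalized norm `‖M‖₂`. -/
noncomputable def l2NormSq (M : Matrix V V 𝕜) : ℝ :=
  (∑ a, ∑ b, ‖M a b‖ ^ 2) / (Fintype.card V : ℝ) ^ 2

/-- The inequality `‖M‖_□ ≤ c` for the normalized cut norm, tested on `𝕜`-valued functions `f`, `g`
bounded by `1`. -/
def CutNormLE (M : Matrix V V 𝕜) (c : ℝ) : Prop :=
  ∀ f g : V → 𝕜, (∀ x, ‖f x‖ ≤ 1) → (∀ x, ‖g x‖ ≤ 1) →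
    ‖∑ a, ∑ b, f a * M a b * g b‖ / (Fintype.card V : ℝ) ^ 2 ≤ c

theorem CutNormLE.mono {M : Matrix V V 𝕜} {c d : ℝ} (hM : CutNormLE M c) (hcd : c ≤ d) :
    CutNormLE M d :=
  fun f g hf hg => (hM f g hf hg).trans hcd

theorem l2NormSq_add_le (M M' : Matrix V V 𝕜) :
    l2NormSq (M + M') ≤ 2 * (l2NormSq M + l2NormSq M') := by
  have hentry (a b : V) : ‖(M + M') a b‖ ^ 2 ≤ 2 * (‖M a b‖ ^ 2 + ‖M' a b‖ ^ 2) :=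
    (pow_le_pow_left₀ (norm_nonneg _) (norm_add_le _ _) 2).trans add_sq_le
  simp only [l2NormSq, ← add_div, mul_div_assoc', ← sum_add_distrib, mul_sum]
  gcongr
  exact hentry _ _

theorem l2NormSq_le_sq {M : Matrix V V 𝕜} {c : ℝ} (hM : ∀ a b, ‖M a b‖ ≤ c) :
    l2NormSq M ≤ c ^ 2 := by
  refine div_le_of_le_mul₀ (sq_nonneg _) (sq_nonneg _) ?_
  calc ∑ a, ∑ b, ‖M a b‖ ^ 2 ≤ ∑ _ : V, ∑ _ : V, c ^ 2 := by
        gcongr with a _ b _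
        exact hM a b
    _ = c ^ 2 * (Fintype.card V : ℝ) ^ 2 := by
        simp only [sum_const, card_univ, nsmul_eq_mul]
        ring

theorem norm_toLp_le_sqrt_card {f : V → 𝕜} (hf : ∀ x, ‖f x‖ ≤ 1) :
    ‖WithLp.toLp 2 f‖ ≤ √(Fintype.card V) := by
  rw [EuclideanSpace.norm_eq]
  gcongr
  calc ∑ x, ‖f x‖ ^ 2 ≤ ∑ _ : V, (1 : ℝ) := by
        gcongr with x
        exact pow_le_one₀ (norm_nonneg _) (hf x)
    _ = Fintype.card V := by simp only [sum_const, card_univ, nsmul_eq_mul, mul_one]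

open scoped Matrix.Norms.L2Operator in
theorem norm_dotProduct_mulVec_le_l2_opNorm [DecidableEq V] (M : Matrix V V 𝕜) (f g : V → 𝕜) :
    ‖f ⬝ᵥ M.mulVec g‖ ≤ ‖WithLp.toLp 2 f‖ * (‖M‖ * ‖WithLp.toLp 2 g‖) := by
  have hinner : f ⬝ᵥ M.mulVec g =
      inner 𝕜 (WithLp.toLp 2 (star f)) (WithLp.toLp 2 (M.mulVec g)) := by
    rw [EuclideanSpace.inner_eq_star_dotProduct, star_star, dotProduct_comm]
  have hstar : ‖WithLp.toLp 2 (star f)‖ = ‖WithLp.toLp 2 f‖ := by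
    simp only [EuclideanSpace.norm_eq, Pi.star_apply, norm_star]
  rw [hinner, ← hstar]
  refine (norm_inner_le_norm _ _).trans ?_
  gcongr
  exact M.l2_opNorm_mulVec (WithLp.toLp 2 g)

open scoped Matrix.Norms.L2Operator in
theorem cutNormLE_of_l2_opNorm_le [DecidableEq V] {M : Matrix V V 𝕜} {c : ℝ} (hc : 0 ≤ c)
    (hM : ‖M‖ ≤ Fintype.card V * c) : CutNormLE M c := by
  intro f g hf hg
  refine div_le_of_le_mul₀ (sq_nonneg _) hc ?_
  calc ‖∑ a, ∑ b, f a * M a b * g b‖ = ‖f ⬝ᵥ M.mulVec g‖ := by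
        simp only [dotProduct, Matrix.mulVec, mul_sum, mul_assoc]
    _ ≤ ‖WithLp.toLp 2 f‖ * (‖M‖ * ‖WithLp.toLp 2 g‖) := norm_dotProduct_mulVec_le_l2_opNorm M f g
    _ ≤ √(Fintype.card V) * (Fintype.card V * c * √(Fintype.card V)) := by
        gcongr <;> exact norm_toLp_le_sqrt_card ‹_›
    _ = √(Fintype.card V) ^ 2 * (Fintype.card V * c) := by ring
    _ = c * (Fintype.card V : ℝ) ^ 2 := by rw [Real.sq_sqrt (Nat.cast_nonneg _)]; ring

end Norms

section SpectralPart

variable {V 𝕜 : Type*} [RCLike 𝕜] [Fintype V] [DecidableEq V] {G : Matrix V V 𝕜}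

/-- The part of `G` carried by the eigenvalues `λ` with `|λ / |V|| ∈ s`. -/
noncomputable def spectralPart (G : Matrix V V 𝕜) (s : Set ℝ) : Matrix V V 𝕜 :=
  cfc (((fun x : ℝ => |x / Fintype.card V|) ⁻¹' s).indicator id) G

theorem spectralPart_union {s t : Set ℝ} (hst : Disjoint s t) :
    spectralPart G (s ∪ t) = spectralPart G s + spectralPart G t := by
  rw [spectralPart, Set.preimage_union, Set.indicator_union_of_disjoint (hst.preimage _)]
  exact cfc_add G _ _ (G.finite_real_spectrum.continuousOn _)
    (G.finite_real_spectrum.continuousOn _)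

theorem spectralPart_univ (hG : G.IsHermitian) : spectralPart G Set.univ = G := by
  simp only [spectralPart, Set.preimage_univ, Set.indicator_univ]
  exact cfc_id ℝ G hG

theorem eq_spectralPart_add_add (hG : G.IsHermitian) {δ δ' : ℝ} (hδ : δ' ≤ δ) :
    G = spectralPart G (.Ioi δ) + spectralPart G (.Ioc δ' δ) + spectralPart G (.Iic δ') := by
  rw [← spectralPart_union Set.Ioc_disjoint_Ioi_same.symm, Set.union_comm,
    Set.Ioc_union_Ioi_eq_Ioi hδ, ← spectralPart_union (Set.Iic_disjoint_Ioi le_rfl).symm,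
    Set.union_comm, Set.Iic_union_Ioi, spectralPart_univ hG]

theorem spectralPart_apply_perm {σ : Equiv.Perm V} (hσ : ∀ a b, G (σ a) (σ b) = G a b)
    (s : Set ℝ) (a b : V) : spectralPart G s (σ a) (σ b) = spectralPart G s a b :=
  congrFun₂ (submatrix_cfc_eq_self (Matrix.ext hσ) _) a b

open Classical in
theorem spectralPart_apply (hG : G.IsHermitian) (s : Set ℝ) (a b : V) :
    spectralPart G s a b = ∑ i with |hG.eigenvalues i / Fintype.card V| ∈ s,
      (hG.eigenvalues i : 𝕜) * (hG.eigenvectorUnitary : Matrix V V 𝕜) a i *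
        star ((hG.eigenvectorUnitary : Matrix V V 𝕜) b i) := by
  rw [spectralPart, cfc_apply_eq_sum hG, sum_filter]
  refine sum_congr rfl fun i _ => ?_
  simp only [Set.indicator_apply, Set.mem_preimage, id, apply_ite ((↑) : ℝ → 𝕜), RCLike.ofReal_zero,
    ite_mul, zero_mul]

open Classical in
theorem l2NormSq_spectralPart (hG : G.IsHermitian) (s : Set ℝ) :
    l2NormSq (spectralPart G s) = ∑ i with |hG.eigenvalues i / Fintype.card V| ∈ s,
      (hG.eigenvalues i / Fintype.card V) ^ 2 := by
  rw [l2NormSq, spectralPart, sum_norm_sq_cfc hG, sum_div, sum_filter]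
  refine sum_congr rfl fun i _ => ?_
  simp only [Set.indicator_apply, Set.mem_preimage, id, ite_pow, zero_pow two_ne_zero, ite_div,
    zero_div, div_pow]

theorem cutNormLE_spectralPart_Iic [Nonempty V] (hG : G.IsHermitian) {δ : ℝ} (hδ : 0 ≤ δ) :
    CutNormLE (spectralPart G (.Iic δ)) δ := by
  classical
  have hcard : (0 : ℝ) < Fintype.card V := Nat.cast_pos.2 Fintype.card_pos
  refine cutNormLE_of_l2_opNorm_le hδ (l2_opNorm_cfc_le hG (by positivity) fun i => ?_)
  rw [Set.indicator_apply]
  split_ifs with hi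
  · rw [Set.mem_preimage, Set.mem_Iic, abs_div, Nat.abs_cast] at hi
    exact (div_le_iff₀' hcard).1 hi
  · simpa only [abs_zero] using mul_nonneg hcard.le hδ

theorem sum_sq_eigenvalues_div_card_le_one (hG : G.IsHermitian) (hG_le : ∀ a b, ‖G a b‖ ≤ 1) :
    ∑ i, (hG.eigenvalues i / Fintype.card V) ^ 2 ≤ 1 := by
  classical
  have h := l2NormSq_spectralPart hG .univ
  rw [spectralPart_univ hG] at h
  simp only [Set.mem_univ, filter_true] at h
  rw [← h]
  exact (l2NormSq_le_sq hG_le).trans_eq (one_pow 2)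

theorem sq_eigenvalue_mul_sq_norm_eigenvector_le (hG : G.IsHermitian)
    (hG_le : ∀ a b, ‖G a b‖ ≤ 1) (a i : V) :
    hG.eigenvalues i ^ 2 * ‖(hG.eigenvectorUnitary : Matrix V V 𝕜) a i‖ ^ 2 ≤ Fintype.card V := by
  have hid : cfc id G = G := cfc_id ℝ G hG
  have hrow := sum_norm_sq_cfc_row hG id a
  rw [hid] at hrow
  calc hG.eigenvalues i ^ 2 * ‖(hG.eigenvectorUnitary : Matrix V V 𝕜) a i‖ ^ 2
      ≤ ∑ j, hG.eigenvalues j ^ 2 * ‖(hG.eigenvectorUnitary : Matrix V V 𝕜) a j‖ ^ 2 :=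
        single_le_sum (f := fun j =>
          hG.eigenvalues j ^ 2 * ‖(hG.eigenvectorUnitary : Matrix V V 𝕜) a j‖ ^ 2)
          (fun _ _ => by positivity) (mem_univ i)
    _ = ∑ b, ‖G a b‖ ^ 2 := hrow.symm
    _ ≤ ∑ _ : V, (1 : ℝ) := by
        gcongr with b
        exact pow_le_one₀ (norm_nonneg _) (hG_le a b)
    _ = Fintype.card V := by simp only [sum_const, card_univ, nsmul_eq_mul, mul_one]

theorem sqrt_card_mul_norm_eigenvector_le (hG : G.IsHermitian) (hG_le : ∀ a b, ‖G a b‖ ≤ 1)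
    {δ : ℝ} (hδ : 0 < δ) {i : V} (hi : δ < |hG.eigenvalues i / Fintype.card V|) (a : V) :
    √(Fintype.card V) * ‖(hG.eigenvectorUnitary : Matrix V V 𝕜) a i‖ ≤ 1 / δ := by
  have : Nonempty V := ⟨a⟩
  have hcard : (0 : ℝ) < Fintype.card V := Nat.cast_pos.2 Fintype.card_pos
  rw [le_div_iff₀ hδ, ← sq_le_one_iff₀ (by positivity)]
  calc (√(Fintype.card V) * ‖(hG.eigenvectorUnitary : Matrix V V 𝕜) a i‖ * δ) ^ 2
      = Fintype.card V * ‖(hG.eigenvectorUnitary : Matrix V V 𝕜) a i‖ ^ 2 * δ ^ 2 := by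
        rw [mul_pow, mul_pow, Real.sq_sqrt hcard.le]
    _ ≤ Fintype.card V * ‖(hG.eigenvectorUnitary : Matrix V V 𝕜) a i‖ ^ 2 *
          |hG.eigenvalues i / Fintype.card V| ^ 2 := by gcongr
    _ = hG.eigenvalues i ^ 2 * ‖(hG.eigenvectorUnitary : Matrix V V 𝕜) a i‖ ^ 2 /
          Fintype.card V := by
        rw [sq_abs]; field_simp
    _ ≤ 1 := div_le_one_of_le₀ (sq_eigenvalue_mul_sq_norm_eigenvector_le hG hG_le a i) hcard.le

end SpectralPart

section Decomposition

variable {𝕜 : Type*} [RCLike 𝕜]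

variable (𝕜) in
theorem exists_isStepMatrix_near_spectralPart {δ η : ℝ} (hδ : 0 < δ) (hη : 0 < η) :
    ∃ n : ℕ, ∀ {V : Type u} [Fintype V] [DecidableEq V] {G : Matrix V V 𝕜}, G.IsHermitian →
      (∀ a b, ‖G a b‖ ≤ 1) → ∃ (s : ℕ) (S : V → V → 𝕜), s ≤ n ∧ IsStepMatrix s S ∧
        ∀ a b, dist (spectralPart G (.Ioi δ) a b) (S a b) ≤ η := by
  classical
  obtain ⟨n, hn⟩ := exists_card_bound_isStepMatrix_near_sum (𝕜 := 𝕜) ⌊1 / δ ^ 2⌋₊ (1 / δ) hη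
  refine ⟨n, fun {V _ _ G} hG hG_le => ?_⟩
  have hsum := sum_sq_eigenvalues_div_card_le_one hG hG_le
  have hterm (a b i : V) :
      (hG.eigenvalues i : 𝕜) * (hG.eigenvectorUnitary : Matrix V V 𝕜) a i *
        star ((hG.eigenvectorUnitary : Matrix V V 𝕜) b i) =
      ((hG.eigenvalues i / Fintype.card V : ℝ) : 𝕜) *
        ((√(Fintype.card V) : ℝ) * (hG.eigenvectorUnitary : Matrix V V 𝕜) a i) *
        star ((√(Fintype.card V) : ℝ) * (hG.eigenvectorUnitary : Matrix V V 𝕜) b i) := by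
    have : Nonempty V := ⟨a⟩
    have hsqrt : ((√(Fintype.card V) : ℝ) : 𝕜) ^ 2 = Fintype.card V := by
      exact_mod_cast Real.sq_sqrt (Nat.cast_nonneg _)
    simp only [star_mul', RCLike.star_def, RCLike.conj_ofReal, RCLike.ofReal_div,
      RCLike.ofReal_natCast]
    field_simp
    rw [hsqrt]
  simp only [spectralPart_apply hG, hterm]
  refine hn _ _ (fun a i => (√(Fintype.card V) : ℝ) * (hG.eigenvectorUnitary : Matrix V V 𝕜) a i)
    ?_ (fun i _ => ?_) (fun i hi a => ?_)
  · simpa only [Set.mem_Ioi] using card_filter_lt_abs_le hsum hδ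
  · rw [RCLike.norm_ofReal, ← sq_le_one_iff_abs_le_one]
    exact (single_le_sum (fun j _ => sq_nonneg (hG.eigenvalues j / Fintype.card V))
      (mem_univ i)).trans hsum
  · rw [norm_mul, RCLike.norm_ofReal, abs_of_nonneg (Real.sqrt_nonneg _)]
    exact sqrt_card_mul_norm_eigenvector_le hG hG_le hδ (mem_filter.1 hi).2 a

theorem exists_spectral_decomposition {δ δ' η : ℝ} {V : Type*} [Fintype V]
    [DecidableEq V] [Nonempty V] {G : Matrix V V 𝕜} (hG : G.IsHermitian) (hδ' : 0 ≤ δ')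
    (hδ'δ : δ' ≤ δ) {S : Matrix V V 𝕜}
    (hS : ∀ a b, dist (spectralPart G (.Ioi δ) a b) (S a b) ≤ η)
    (hmid : l2NormSq (spectralPart G (.Ioc δ' δ)) ≤ η ^ 2) :
    ∃ E R : Matrix V V 𝕜, G = S + E + R ∧ l2NormSq E ≤ (2 * η) ^ 2 ∧ CutNormLE R δ' := by
  refine ⟨spectralPart G (.Ioi δ) - S + spectralPart G (.Ioc δ' δ), spectralPart G (.Iic δ'),
    ?_, ?_, cutNormLE_spectralPart_Iic hG hδ'⟩
  · nth_rewrite 1 [eq_spectralPart_add_add hG hδ'δ]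
    abel
  · have hround : l2NormSq (spectralPart G (.Ioi δ) - S) ≤ η ^ 2 :=
      l2NormSq_le_sq fun a b => (dist_eq_norm _ _).symm.trans_le (hS a b)
    calc _ ≤ 2 * (l2NormSq (spectralPart G (.Ioi δ) - S) + l2NormSq (spectralPart G (.Ioc δ' δ))) :=
          l2NormSq_add_le _ _
      _ ≤ 2 * (η ^ 2 + η ^ 2) := by gcongr
      _ = (2 * η) ^ 2 := by ring

theorem exists_finset_forall_exists_l2NormSq_spectralPart_le {φ : ℝ → ℝ}
    (hφ : ∀ δ, 0 < δ → 0 < φ δ ∧ φ δ ≤ δ) {η : ℝ} (hη : 0 < η) :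
    ∃ D : Finset ℝ, (∀ δ ∈ D, 0 < δ) ∧ ∀ {V : Type u} [Fintype V] [DecidableEq V]
      {G : Matrix V V 𝕜}, G.IsHermitian → (∀ a b, ‖G a b‖ ≤ 1) →
      ∃ δ ∈ D, l2NormSq (spectralPart G (.Ioc (φ δ) δ)) ≤ η := by
  obtain ⟨D, hD, hband⟩ := exists_finset_forall_exists_sum_Ioc_le hφ hη
  refine ⟨D, hD, fun {V _ _ G} hG hG_le => ?_⟩
  obtain ⟨δ, hδ, hδ_le⟩ := hband (fun i => |hG.eigenvalues i / Fintype.card V|) _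
    (fun i => sq_nonneg _) (sum_sq_eigenvalues_div_card_le_one hG hG_le)
  refine ⟨δ, hδ, ?_⟩
  rw [l2NormSq_spectralPart hG]
  convert hδ_le

variable (𝕜) in
theorem symmetry_preserving_regularity_lemma_general {F : ℕ → ℝ} (hF : ∀ s, 0 < F s) {ε : ℝ}
    (hε : 0 < ε) :
    ∃ n : ℕ, ∀ (V : Type u) [Fintype V] [Nonempty V] (G : Matrix V V 𝕜), G.IsHermitian →
      (∀ a b, ‖G a b‖ ≤ 1) →
      ∃ (s : ℕ) (S E R : Matrix V V 𝕜), s ≤ n ∧ G = S + E + R ∧ IsStepMatrix s S ∧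
        (∀ g : Equiv.Perm V, (∀ a b, G (g a) (g b) = G a b) →
          ∀ a b, ‖S (g.symm a) (g.symm b) - S a b‖ ≤ ε) ∧
        l2NormSq E ≤ ε ^ 2 ∧ CutNormLE R (F s) := by
  classical
  choose! n hn using fun δ (hδ : 0 < δ) =>
    exists_isStepMatrix_near_spectralPart.{u} 𝕜 hδ (half_pos hε)
  choose c hc hcF using exists_gt_forall_le_of_forall_lt hF
  obtain ⟨D, hD, hband⟩ := exists_finset_forall_exists_l2NormSq_spectralPart_le.{u} (𝕜 := 𝕜)
    (φ := fun δ => min (c (n δ)) δ) (fun δ hδ => ⟨lt_min (hc _) hδ, min_le_right _ _⟩)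
    (pow_pos (half_pos hε) 2)
  refine ⟨D.sup n, fun V _ _ G hG hG_le => ?_⟩
  obtain ⟨δ, hδD, hmid⟩ := hband hG hG_le
  have hδ := hD δ hδD
  obtain ⟨s, S, hsn, hS, hMS⟩ := hn δ hδ hG hG_le
  obtain ⟨E, R, hGSER, hE, hR⟩ := exists_spectral_decomposition hG
    (lt_min (hc (n δ)) hδ).le (min_le_right _ _) hMS hmid
  refine ⟨s, S, E, R, hsn.trans (le_sup hδD), hGSER, hS, fun g hg a b => ?_, ?_,
    hR.mono ((min_le_left _ _).trans (hcF _ s hsn))⟩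
  · have hg_symm (a b : V) : G (g.symm a) (g.symm b) = G a b := by
      rw [← hg, g.apply_symm_apply, g.apply_symm_apply]
    rw [← dist_eq_norm, ← add_halves ε]
    exact dist_comp_comp_le_of_dist_le hMS (spectralPart_apply_perm hg_symm _) a b
  · rwa [mul_div_cancel₀ ε two_ne_zero] at hE

end Decomposition

/-- **Symmetry preserving regularity lemma.** For every function `F : ℝ⁺ × ℕ → ℝ⁺` decreasing in
each coordinate and every `ε > 0` there is `n` such that every symmetric matrix
`G : V × V → [-1,1]` on a finite nonempty set `V` decomposes as `G = S + E + R` where `S` is a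
step function with `s ≤ n` steps, `‖gSg⁻¹ - S‖_∞ ≤ ε` for every `g ∈ Aut(G)`, `‖E‖₂ ≤ ε` and
`‖R‖_□ ≤ F(ε,s)` (all norms normalized by the uniform probability measure on `V`). -/
theorem symmetry_preserving_regularity_lemma
    (F : ℝ → ℕ → ℝ) (hFpos : ∀ (x : ℝ) (s : ℕ), 0 < x → 0 < F x s)
    (hFdec₁ : ∀ s : ℕ, ∀ x₁ x₂ : ℝ, 0 < x₁ → x₁ ≤ x₂ → F x₂ s ≤ F x₁ s)
    (hFdec₂ : ∀ x : ℝ, 0 < x → ∀ s₁ s₂ : ℕ, s₁ ≤ s₂ → F x s₂ ≤ F x s₁)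
    (ε : ℝ) (hε : 0 < ε) :
    ∃ n : ℕ, ∀ (V : Type) (_ : Fintype V) (_ : Nonempty V) (G : V → V → ℝ),
      (∀ a b, G a b = G b a) → (∀ a b, |G a b| ≤ 1) →
      ∃ (s : ℕ) (S E R : V → V → ℝ),
        s ≤ n ∧
        (∀ a b, G a b = S a b + E a b + R a b) ∧
        -- `S` is a step function with `s` steps
        (∃ (P : V → Fin s) (T : Fin s → Fin s → ℝ),
          Function.Surjective P ∧ ∀ a b, S a b = T (P a) (P b)) ∧
        -- approximate invariance of `S` under every automorphism of `G`
        (∀ g : Equiv.Perm V, (∀ a b, G (g a) (g b) = G a b) →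
          ∀ a b, |S (g.symm a) (g.symm b) - S a b| ≤ ε) ∧
        -- `‖E‖₂ ≤ ε`
        ((∑ a : V, ∑ b : V, (E a b) ^ 2) / (Fintype.card V : ℝ) ^ 2 ≤ ε ^ 2) ∧
        -- `‖R‖_□ ≤ F(ε, s)`
        (∀ f g : V → ℝ, (∀ x, |f x| ≤ 1) → (∀ x, |g x| ≤ 1) →
          |∑ a : V, ∑ b : V, f a * R a b * g b| / (Fintype.card V : ℝ) ^ 2 ≤ F ε s) := by
  obtain ⟨n, hn⟩ := symmetry_preserving_regularity_lemma_general ℝ (fun s => hFpos ε s hε) hε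
  refine ⟨n, fun V _ _ G hsymm hG => ?_⟩
  obtain ⟨s, S, E, R, hs, hGSER, hS, hinv, hE, hR⟩ :=
    hn V (Matrix.of G) (.ext fun a b => hsymm b a) hG
  refine ⟨s, S, E, R, hs, congrFun₂ hGSER, hS, hinv, ?_, hR⟩
  simpa only [l2NormSq, Real.norm_eq_abs, sq_abs] using hE
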